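/- Let R be a polynomial ring over an algebraically closed field K. Let I be an ideal minimally generated by n quadrics, contained in a prime ideal (x, y) with x, y linearly independent linear forms, and suppose I is represented by minors by a 2×(n+1) matrix M of linear forms whose first column is (x, y)^T. If M is 1-generic, then pd(R/I) ≤ n. -/

import Mathlib

open MvPolynomial Filter

universe u

/-- `PdLE R n M` means the `R`-module `M` has projective dimension at most `n`:
either `M` is projective (`n = 0`), or `M` is a quotient of a free module by a
submodule of projective dimension at most `n - 1`. -/
def PdLE (R : Type u) [CommRing R] : ℕ → (M : Type u) → [AddCommGroup M] → [Module R M] → Prop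
  | 0, M, _, _ => Module.Projective R M
  | n + 1, M, _, _ => ∃ (F : Type u) (_ : AddCommGroup F) (_ : Module R F),
      Module.Free R F ∧ ∃ f : F →ₗ[R] M, Function.Surjective f ∧ PdLE R n (LinearMap.ker f)

/-- The projective dimension of an `R`-module `M`, as an element of `ℕ∞`
(`⊤` if `M` has no finite free resolution). -/
noncomputable def projDim (R : Type u) [CommRing R] (M : Type u) [AddCommGroup M]
    [Module R M] : ℕ∞ :=
  sInf ((fun n : ℕ => (n : ℕ∞)) '' {n : ℕ | PdLE R n M})

/-- The height of an ideal: the infimum of the heights of the prime ideals containing it. -/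
noncomputable def idealHeight {R : Type*} [CommRing R] (I : Ideal R) : ℕ∞ :=
  ⨅ p ∈ {p : PrimeSpectrum R | I ≤ p.asIdeal}, Order.height p

/-- The length of a module, defined as the Krull dimension of its lattice of submodules. -/
noncomputable def moduleLength (R : Type u) [CommRing R] (M : Type u) [AddCommGroup M]
    [Module R M] : WithBot ℕ∞ :=
  Order.krullDim (Submodule R M)

/-- `IsHSMultiplicity R mx I e` asserts that the Hilbert–Samuel multiplicity of `R/I`
with respect to the ideal `mx` equals `e`: for `d = dim R/I` there is a polynomial `P`
of degree `d` with `e = d! · (leading coefficient of P)` such that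
`length (R/(I + mx^n)) = P(n)` for all large `n`. -/
def IsHSMultiplicity (R : Type u) [CommRing R] (mx I : Ideal R) (e : ℕ) : Prop :=
  ∃ (d : ℕ) (P : Polynomial ℚ),
    ringKrullDim (R ⧸ I) = (d : WithBot ℕ∞) ∧
    P.natDegree = d ∧
    (e : ℚ) = P.leadingCoeff * d.factorial ∧
    ∀ᶠ n : ℕ in Filter.atTop, ∃ k : ℕ, (k : ℚ) = P.eval (n : ℚ) ∧
      moduleLength R (R ⧸ (I ⊔ mx ^ n)) = ((k : ℕ∞) : WithBot ℕ∞)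

/-- A matrix over a `K`-algebra is `1`-generic if it has no generalized zero entry:
for every nonzero vectors `u`, `v` of scalars, `uᵀ M v ≠ 0`. -/
def OneGeneric (K : Type*) [Field K] {R : Type u} [CommRing R] [Algebra K R]
    {m l : ℕ} (M : Matrix (Fin m) (Fin l) R) : Prop :=
  ∀ (u : Fin m → K) (v : Fin l → K), u ≠ 0 → v ≠ 0 →
    ∑ i, ∑ j, algebraMap K R (u i * v j) * M i j ≠ 0

/-- The ideal of all `2 × 2` minors of a `2 × l` matrix. -/
def minors2 {R : Type u} [CommRing R] {l : ℕ} (M : Matrix (Fin 2) (Fin l) R) : Ideal R :=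
  Ideal.span (Set.range fun p : Fin l × Fin l => M 0 p.1 * M 1 p.2 - M 0 p.2 * M 1 p.1)

/-- The homogeneous maximal ideal of a polynomial ring. -/
noncomputable def maxIdeal (K : Type*) [Field K] (σ : Type*) : Ideal (MvPolynomial σ K) :=
  Ideal.span (Set.range (X : σ → MvPolynomial σ K))

/-- The ideal represented by minors by the `2 × (n+1)` matrix with first column `(x, y)ᵀ`
and remaining columns `(u j, v j)ᵀ`: it is generated by the `2 × 2` minors involving
the first column. -/
def repByMinors {R : Type u} [CommRing R] {n : ℕ} (x y : R) (u v : Fin n → R) : Ideal R :=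
  Ideal.span (Set.range fun j : Fin n => x * v j - y * u j)

open CategoryTheory in
/-- projective dimension `< n`, unbundled. -/
def PdLT (R : Type u) [CommRing R] (n : ℕ) (M : Type u) [AddCommGroup M] [Module R M] : Prop :=
  HasProjectiveDimensionLT (ModuleCat.of R M) n

section pd
variable {R : Type u} [CommRing R] {A B C : Type u} [AddCommGroup A] [AddCommGroup B]
  [AddCommGroup C] [Module R A] [Module R B] [Module R C]

theorem PdLT.mono {n m : ℕ} (h : PdLT R n A) (hnm : n ≤ m) : PdLT R m A := by
  unfold PdLT at *
  exact CategoryTheory.hasProjectiveDimensionLT_of_ge _ n m hnm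

theorem PdLT.one_iff : PdLT R 1 A ↔ Module.Projective R A := by
  unfold PdLT
  rw [← CategoryTheory.projective_iff_hasProjectiveDimensionLT_one,
    ← IsProjective.iff_projective]

theorem PdLT.ses {f : A →ₗ[R] B} {g : B →ₗ[R] C} (hf : Function.Injective f)
    (hfg : Function.Exact f g) (hg : Function.Surjective g) (n : ℕ) :
    (PdLT R n A → PdLT R n C → PdLT R n B) ∧
    (PdLT R n A → PdLT R (n+1) B → PdLT R (n+1) C) ∧
    (PdLT R n B → PdLT R (n+1) C → PdLT R n A) := by
  let S : CategoryTheory.ShortComplex (ModuleCat.{u} R) :=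
    ModuleCat.shortComplexOfCompEqZero f g hfg.linearMap_comp_eq_zero
  have hS : S.ShortExact := ModuleCat.shortComplex_shortExact S hfg hf hg
  exact ⟨fun h1 h2 => hS.hasProjectiveDimensionLT_X₂ n h1 h2,
    fun h1 h2 => hS.hasProjectiveDimensionLT_X₃ n h1 h2,
    fun h1 h2 => hS.hasProjectiveDimensionLT_X₁ n h1 h2⟩

theorem PdLT.pdLE (n : ℕ) : ∀ (M : Type u) [AddCommGroup M] [Module R M],
    PdLT R (n+1) M → PdLE R n M := by
  induction n with
  | zero => intro M _ _ h; exact PdLT.one_iff.1 h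
  | succ n ih =>
    intro M _ _ h
    have hs : Function.Surjective (Finsupp.linearCombination R (id : M → M)) := fun m =>
      ⟨Finsupp.single m 1, by simp⟩
    refine ⟨M →₀ R, inferInstance, inferInstance, inferInstance,
      Finsupp.linearCombination R (id : M → M), hs, ih _ ?_⟩
    refine (PdLT.ses (Submodule.subtype_injective _)
      (LinearMap.exact_subtype_ker_map (Finsupp.linearCombination R (id : M → M))) hs (n+1)).2.2 ?_ h
    exact PdLT.mono (n := 1) (PdLT.one_iff.2 inferInstance) (by omega)

/-- short exact sequence of quotients. -/
theorem PdLT.quot {p : Submodule R A} {q : Submodule R B} {r : Submodule R C}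
    (f : A →ₗ[R] B) (g : B →ₗ[R] C)
    (h1 : ∀ a, f a ∈ q ↔ a ∈ p) (h2 : ∀ b, g b ∈ r ↔ ∃ a, b - f a ∈ q)
    (hg : ∀ c, ∃ b, c - g b ∈ r) (n : ℕ) :
    (PdLT R n (A ⧸ p) → PdLT R n (C ⧸ r) → PdLT R n (B ⧸ q)) ∧
    (PdLT R n (A ⧸ p) → PdLT R (n+1) (B ⧸ q) → PdLT R (n+1) (C ⧸ r)) ∧
    (PdLT R n (B ⧸ q) → PdLT R (n+1) (C ⧸ r) → PdLT R n (A ⧸ p)) := by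
  have hf' : p ≤ q.comap f := fun a ha => (h1 a).2 ha
  have hg' : q ≤ r.comap g := fun b hb => (h2 b).2 ⟨0, by simpa using hb⟩
  refine PdLT.ses (f := p.mapQ q f hf') (g := q.mapQ r g hg') ?_ ?_ ?_ n
  · rw [injective_iff_map_eq_zero]
    intro a
    induction a using Submodule.Quotient.induction_on with | _ a
    simp only [Submodule.mapQ_apply, Submodule.Quotient.mk_eq_zero]
    exact (h1 a).1
  · intro b
    induction b using Submodule.Quotient.induction_on with | _ b
    simp only [Submodule.mapQ_apply, Submodule.Quotient.mk_eq_zero, h2, Set.mem_range]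
    constructor
    · rintro ⟨a, ha⟩
      exact ⟨Submodule.Quotient.mk a, by
        rw [Submodule.mapQ_apply]; exact ((Submodule.Quotient.eq q).2 ha).symm⟩
    · rintro ⟨a, ha⟩
      induction a using Submodule.Quotient.induction_on with | _ a
      rw [Submodule.mapQ_apply] at ha
      exact ⟨a, (Submodule.Quotient.eq q).1 ha.symm⟩
  · intro c
    induction c using Submodule.Quotient.induction_on with | _ c
    obtain ⟨b, hb⟩ := hg c
    exact ⟨Submodule.Quotient.mk b, by
      rw [Submodule.mapQ_apply]; exact ((Submodule.Quotient.eq r).2 hb).symm⟩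

theorem PdLT.quot_bot [Module.Projective R A] {p : Submodule R A} (hp : p = ⊥) :
    PdLT R 1 (A ⧸ p) := by
  subst hp
  exact PdLT.one_iff.2 (Module.Projective.of_equiv (Submodule.quotEquivOfEqBot ⊥ rfl).symm)

end pd

/-- every element is a nonzerodivisor modulo the ideal of any set of other elements. -/
def StrongReg {R : Type*} [CommRing R] {ι : Type*} (v : ι → R) : Prop :=
  ∀ (t : Finset ι) (a : ι), a ∉ t → ∀ r, r * v a ∈ Ideal.span (v '' t) → r ∈ Ideal.span (v '' t)

section core
variable {R : Type u} [CommRing R] {ι : Type} [DecidableEq ι]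

theorem mem_span_fin {M : Type*} [AddCommGroup M] [Module R M] (c : ι → M) (s : Finset ι) (m : M) :
    m ∈ Submodule.span R (c '' s) ↔ ∃ z : ι → R, ∑ j ∈ s, z j • c j = m := by
  rw [Submodule.mem_span_image_finset_iff_exists_fun]
  constructor
  · rintro ⟨z, hz⟩
    refine ⟨fun j => if h : j ∈ s then z ⟨j, h⟩ else 0, ?_⟩
    rw [← hz, ← Finset.sum_coe_sort s]
    exact Finset.sum_congr rfl fun j _ => by simp
  · rintro ⟨z, hz⟩
    exact ⟨fun j => z j, by rw [← hz, ← Finset.sum_coe_sort s]⟩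

theorem StrongReg.koszul {v : ι → R} (hv : StrongReg v) (s : Finset ι) :
    ∀ z : ι → R, ∑ j ∈ s, z j * v j = 0 → ∃ σ : ι → ι → R, (∀ i j, σ i j = - σ j i) ∧
      (∀ i, σ i i = 0) ∧ ∀ j ∈ s, z j = ∑ l ∈ s, σ j l * v l := by
  induction s using Finset.induction_on with
  | empty => intro z _; exact ⟨0, by simp, by simp, by simp⟩
  | insert a s ha ih =>
    intro z hz
    rw [Finset.sum_insert ha] at hz
    have h1 : z a ∈ Ideal.span (v '' s) := by
      refine hv s a ha _ ?_
      rw [show z a * v a = -∑ j ∈ s, z j * v j by linear_combination hz]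
      exact neg_mem (Ideal.sum_mem _ fun j hj => Ideal.mul_mem_left _ _
        (Ideal.subset_span ⟨j, hj, rfl⟩))
    obtain ⟨c, hc⟩ := (mem_span_fin v s _).1 h1
    simp only [smul_eq_mul] at hc
    obtain ⟨σ, h2, h3, h4⟩ := ih (fun j => z j + c j * v a) (by
      simp only [add_mul, Finset.sum_add_distrib]
      rw [show ∑ j ∈ s, c j * v a * v j = z a * v a by
        rw [← hc, Finset.sum_mul]; exact Finset.sum_congr rfl fun _ _ => by ring]
      linear_combination hz)
    refine ⟨fun i j => if i = a then (if j = a then 0 else c j) else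
      if j = a then - c i else σ i j, ?_, ?_, ?_⟩
    · intro i j
      by_cases hi : i = a <;> by_cases hj : j = a <;> simp [hi, hj, h2 i j]
    · intro i
      by_cases hi : i = a <;> simp [hi, h3]
    · intro j hj
      have hne : ∀ l ∈ s, l ≠ a := fun l hl h => ha (h ▸ hl)
      rw [Finset.sum_insert ha]
      rcases Finset.mem_insert.1 hj with rfl | hj
      · simp only [if_true, zero_mul, zero_add]
        rw [← hc]
        exact Finset.sum_congr rfl fun l hl => by simp [hne l hl]
      · simp only [hne j hj, if_false, if_true]
        have := h4 j hj
        rw [Finset.sum_congr rfl (g := fun l => σ j l * v l) fun l hl => by simp [hne l hl]]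
        linear_combination this

theorem StrongReg.pd {v : ι → R} (hv : StrongReg v) (s : Finset ι) :
    PdLT R (s.card + 1) (R ⧸ (Ideal.span (v '' s) : Ideal R)) := by
  induction s using Finset.induction_on with
  | empty => exact (PdLT.quot_bot (by simp))
  | insert a s ha ih =>
    rw [Finset.card_insert_of_notMem ha]
    refine (PdLT.quot (p := Ideal.span (v '' s)) (q := Ideal.span (v '' s))
      (LinearMap.mulRight R (v a)) LinearMap.id ?_ ?_ ?_ _).2.1 ih (ih.mono (by omega))
    · intro r
      exact ⟨hv s a ha r, fun h => Ideal.mul_mem_right _ _ h⟩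
    · intro b
      rw [Finset.coe_insert, Set.image_insert_eq, LinearMap.id_apply, Ideal.mem_span_insert]
      constructor
      · rintro ⟨c, z, hz, rfl⟩
        exact ⟨c, by simpa using hz⟩
      · rintro ⟨c, hc⟩
        exact ⟨c, _, hc, by simp⟩
    · intro c; exact ⟨c, by simp⟩

/-- alternating double sums vanish -/
theorem alt_sum {σ : ι → ι → R} (h1 : ∀ i j, σ i j = - σ j i) (h2 : ∀ i, σ i i = 0)
    (s : Finset ι) (u : ι → R) : ∑ j ∈ s, ∑ l ∈ s, σ j l * (u j * u l) = 0 := by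
  induction s using Finset.induction_on with
  | empty => simp
  | insert a s ha ih =>
    simp only [Finset.sum_insert ha, Finset.sum_add_distrib, ih, h2]
    have : ∑ j ∈ s, σ j a * (u j * u a) = ∑ j ∈ s, -(σ a j * (u a * u j)) :=
      Finset.sum_congr rfl fun j _ => by rw [h1 j a]; ring
    rw [this]
    simp

/-- image of the matrix with columns in `s`. -/
def colSpan (u v : ι → R) (s : Finset ι) : Submodule R (R × R) :=
  Submodule.span R ((fun j => (u j, v j)) '' s)

theorem mem_colSpan {u v : ι → R} {s : Finset ι} {a b : R} : (a, b) ∈ colSpan u v s ↔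
    ∃ z : ι → R, ∑ j ∈ s, z j * u j = a ∧ ∑ j ∈ s, z j * v j = b := by
  unfold colSpan
  rw [mem_span_fin]
  simp [Prod.ext_iff, Prod.fst_sum, Prod.snd_sum]

theorem colSpan_swap {u v : ι → R} (hv : StrongReg v) {s : Finset ι} {a : R}
    (h : (a, 0) ∈ colSpan u v s) : (0, a) ∈ colSpan u v s := by
  obtain ⟨z, h1, h2⟩ := mem_colSpan.1 h
  obtain ⟨σ, s1, s2, s3⟩ := hv.koszul s z h2
  refine mem_colSpan.2 ⟨fun l => ∑ j ∈ s, σ j l * u j, ?_, ?_⟩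
  · rw [← alt_sum s1 s2 s u, Finset.sum_comm]
    refine Finset.sum_congr rfl fun l _ => ?_
    rw [Finset.sum_mul]
    exact Finset.sum_congr rfl fun _ _ => by ring
  · rw [← h1]
    simp only [Finset.sum_mul]
    rw [Finset.sum_comm]
    refine Finset.sum_congr rfl fun l hl => ?_
    rw [s3 l hl, Finset.sum_mul]
    exact Finset.sum_congr rfl fun _ _ => by ring

theorem colSpan_small {u v : ι → R} (hv : StrongReg v) {s : Finset ι} (hs : s.card ≤ 1) {a : R}
    (h : (a, 0) ∈ colSpan u v s) : a = 0 := by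
  obtain ⟨z, h1, h2⟩ := mem_colSpan.1 h
  obtain ⟨σ, s1, s2, s3⟩ := hv.koszul s z h2
  rw [← h1]
  refine Finset.sum_eq_zero fun j hj => ?_
  rw [s3 j hj, Finset.sum_eq_zero, zero_mul]
  intro l hl
  rw [Finset.card_le_one.1 hs l hl j hj, s2, zero_mul]

open scoped Polynomial in
theorem descent {u v : ι → R} (hv : StrongReg v) {s : Finset ι} {a : R} (d : ℕ) :
    ∀ b : ι → R[X], (∀ j, (b j).natDegree ≤ d) →
    ∑ j ∈ s, b j * (Polynomial.C (u j) - Polynomial.X * Polynomial.C (v j)) = Polynomial.C a →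
    (a, 0) ∈ colSpan u v s := by
  induction d with
  | zero =>
    intro b hb h
    have hb' : ∀ j, b j = Polynomial.C ((b j).coeff 0) := fun j =>
      Polynomial.eq_C_of_natDegree_le_zero (hb j)
    refine mem_colSpan.2 ⟨fun j => (b j).coeff 0, ?_, ?_⟩
    · have := congrArg (fun p => Polynomial.coeff p 0) h
      simpa [Polynomial.finsetSum_coeff, mul_sub, Polynomial.mul_coeff_zero] using this
    · have := congrArg (fun p => Polynomial.coeff p 1) h
      simp only [Polynomial.finsetSum_coeff] at this
      rw [Polynomial.coeff_C, if_neg one_ne_zero, ← neg_eq_zero, ← Finset.sum_neg_distrib] at this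
      rw [← this]
      refine Finset.sum_congr rfl fun j _ => ?_
      rw [hb' j]
      simp [mul_sub, Polynomial.coeff_C_mul, Polynomial.coeff_C]
  | succ d ih =>
    intro b hb h
    have htop : ∑ j ∈ s, (b j).coeff (d+1) * v j = 0 := by
      have := congrArg (fun p => Polynomial.coeff p (d+2)) h
      simp only [Polynomial.finsetSum_coeff] at this
      rw [Polynomial.coeff_C, if_neg (by omega), ← neg_eq_zero, ← Finset.sum_neg_distrib] at this
      rw [← this]
      refine Finset.sum_congr rfl fun j _ => ?_
      rw [mul_sub, ← mul_assoc, Polynomial.coeff_sub, Polynomial.coeff_mul_C,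
        Polynomial.coeff_mul_C, Polynomial.coeff_mul_X,
        Polynomial.coeff_eq_zero_of_natDegree_lt (by have := hb j; omega : (b j).natDegree < d+2)]
      ring
    obtain ⟨σ, s1, s2, s3⟩ := hv.koszul s _ htop
    set ℓ : ι → R[X] := fun j => Polynomial.C (u j) - Polynomial.X * Polynomial.C (v j) with hℓ
    -- corrected coefficients
    let b' : ι → R[X] := fun j => if j ∈ s then
      b j + Polynomial.X ^ d * ∑ l ∈ s, Polynomial.C (σ j l) * ℓ l else 0
    refine ih b' ?_ ?_
    · intro j
      by_cases hj : j ∈ s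
      · simp only [b', hj, if_true]
        rw [Polynomial.natDegree_le_iff_coeff_eq_zero]
        intro N hN
        rw [Polynomial.coeff_add, mul_comm (Polynomial.X ^ d), Polynomial.coeff_mul_X_pow',
          if_pos (by omega), Polynomial.finsetSum_coeff]
        by_cases hN' : N = d + 1
        · subst hN'
          rw [s3 j hj, ← Finset.sum_add_distrib]
          refine Finset.sum_eq_zero fun l _ => ?_
          rw [show d + 1 - d = 1 by omega]
          simp [hℓ, Polynomial.coeff_C]
        · rw [Polynomial.coeff_eq_zero_of_natDegree_lt (by have := hb j; omega), zero_add]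
          refine Finset.sum_eq_zero fun l _ => ?_
          obtain ⟨m, hm⟩ : ∃ m, N - d = m + 2 := ⟨N - d - 2, by omega⟩
          rw [hm]
          simp [hℓ, Polynomial.coeff_C, Polynomial.coeff_X_mul]
      · simp [b', hj]
    · rw [← h]
      have h0 : ∑ j ∈ s, ∑ l ∈ s, Polynomial.C (σ j l) * (ℓ j * ℓ l) = 0 :=
        alt_sum (σ := fun j l => Polynomial.C (σ j l)) (fun i j => by rw [s1 i j]; simp)
          (fun i => by simp [s2]) s ℓ
      have h1 : ∀ j ∈ s, b' j * ℓ j = b j * ℓ j +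
          Polynomial.X ^ d * ∑ l ∈ s, Polynomial.C (σ j l) * (ℓ j * ℓ l) := by
        intro j hj
        have : ∑ l ∈ s, Polynomial.C (σ j l) * (ℓ j * ℓ l) =
            (∑ l ∈ s, Polynomial.C (σ j l) * ℓ l) * ℓ j := by
          rw [Finset.sum_mul]
          exact Finset.sum_congr rfl fun _ _ => by ring
        rw [this]
        simp only [b', hj, if_true]
        ring
      have h2 := Finset.sum_congr rfl h1
      rw [Finset.sum_add_distrib, ← Finset.mul_sum, h0, mul_zero, add_zero] at h2
      exact h2

open scoped Polynomial in
theorem pd_coker {u v : ι → R} (hv : StrongReg v)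
    (hl : StrongReg (fun j => (Polynomial.C (u j) - Polynomial.X * Polynomial.C (v j) : R[X])))
    (s : Finset ι) : PdLT R (max 2 s.card) ((R × R) ⧸ colSpan u v s) := by
  induction s using Finset.induction_on with
  | empty => exact (PdLT.quot_bot (by simp [colSpan])).mono (by simp)
  | insert a s ha ih =>
    rw [Finset.card_insert_of_notMem ha]
    let N : Ideal R := (colSpan u v s).comap (LinearMap.inl R R R)
    have hN : PdLT R (max 1 s.card) (R ⧸ N) := by
      by_cases hs : s.card ≤ 1
      · refine (PdLT.quot_bot ?_).mono (le_max_left _ _)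
        rw [eq_bot_iff]
        intro r hr
        exact colSpan_small hv hs hr
      · refine (PdLT.quot (p := N) (q := colSpan u v s) (r := Ideal.span (v '' s))
          (LinearMap.inl R R R) (LinearMap.snd R R R) (fun _ => Iff.rfl) ?_ ?_ _).2.2
          (ih.mono (by omega)) ((hv.pd s).mono (by omega))
        · rintro ⟨b1, b2⟩
          simp only [LinearMap.snd_apply, LinearMap.inl_apply, Prod.mk_sub_mk, sub_zero,
            mem_colSpan, Ideal.span, mem_span_fin, smul_eq_mul]
          constructor
          · rintro ⟨z, hz⟩
            exact ⟨b1 - ∑ j ∈ s, z j * u j, z, by ring, hz⟩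
          · rintro ⟨_, z, _, hz⟩
            exact ⟨z, hz⟩
        · intro c; exact ⟨(0, c), by simp⟩
    refine (PdLT.quot (p := N) (q := colSpan u v s)
      (LinearMap.toSpanSingleton R (R × R) (u a, v a)) LinearMap.id ?_ ?_ ?_
      (max 1 s.card)).2.1 hN (ih.mono (by omega)) |>.mono (by omega)
    · intro r
      rw [LinearMap.toSpanSingleton_apply]
      change _ ↔ (r, 0) ∈ colSpan u v s
      constructor
      · intro h
        simp only [Prod.smul_mk, smul_eq_mul] at h
        obtain ⟨z, h1, h2⟩ := mem_colSpan.1 h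
        have h3 := hl s a ha (Polynomial.C r) (by
          rw [Ideal.span, mem_span_fin]
          refine ⟨fun j => Polynomial.C (z j), ?_⟩
          simp only [smul_eq_mul]
          rw [mul_sub, mul_left_comm, ← Polynomial.C_mul, ← Polynomial.C_mul, ← h1, ← h2]
          simp only [map_sum, map_mul, Finset.mul_sum, ← Finset.sum_sub_distrib]
          exact Finset.sum_congr rfl fun _ _ => by ring)
        rw [Ideal.span, mem_span_fin] at h3
        obtain ⟨b, hb⟩ := h3
        refine descent hv (s.sup fun j => (b j).natDegree) (fun j => if j ∈ s then b j else 0) ?_ ?_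
        · intro j
          by_cases hj : j ∈ s
          · simp only [hj, if_true]
            exact Finset.le_sup (f := fun j => (b j).natDegree) hj
          · simp [hj]
        · rw [← hb]
          exact Finset.sum_congr rfl fun j hj => by simp [hj]
      · intro h
        have h' := colSpan_swap hv h
        have := add_mem ((colSpan u v s).smul_mem (u a) h) ((colSpan u v s).smul_mem (v a) h')
        convert this using 1
        simp [mul_comm]
    · intro b
      rw [colSpan, Finset.coe_insert, Set.image_insert_eq, LinearMap.id_apply,
        Submodule.mem_span_insert]
      constructor
      · rintro ⟨c, z, hz, rfl⟩
        exact ⟨c, by simpa [colSpan] using hz⟩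
      · rintro ⟨c, hc⟩
        exact ⟨c, _, hc, by simp⟩
    · intro c; exact ⟨c, by simp⟩

end core

section lin
variable {N : ℕ}

/-- linear form with given coefficients -/
noncomputable def linF {A : Type*} [CommRing A] (c : Fin N → A) : MvPolynomial (Fin N) A :=
  ∑ i, C (c i) * X i

theorem StrongReg.of_equiv {R S : Type*} [CommRing R] [CommRing S] {ι : Type} (v : ι → R)
    (e : R ≃+* S) (h : StrongReg (fun i => e (v i))) : StrongReg v := by
  intro t a ha r hr
  have h1 : ∀ r, r ∈ Ideal.span (v '' t) ↔ e r ∈ Ideal.span ((fun i => e (v i)) '' t) := by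
    intro r
    have : Ideal.span ((fun i => e (v i)) '' t) = (Ideal.span (v '' t)).map e := by
      rw [Ideal.map_span, ← Set.image_comp]; rfl
    rw [this, Ideal.mem_map_of_equiv]
    constructor
    · intro h; exact ⟨r, h, rfl⟩
    · rintro ⟨x, hx, hxr⟩; rwa [← e.injective hxr]
  rw [h1] at hr ⊢
  rw [map_mul] at hr
  exact h t a ha _ hr

theorem strongReg_X {A : Type*} [CommRing A] {κ : Type*} {ι : Type} (f : ι → κ)
    (hf : Function.Injective f) :
    StrongReg (fun i => (X (f i) : MvPolynomial κ A)) := by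
  intro t a ha r hr
  have : (fun i => (X (f i) : MvPolynomial κ A)) '' t = X '' (f '' t) := by
    rw [← Set.image_comp]; rfl
  rw [this, mem_ideal_span_X_image] at hr ⊢
  intro m hm
  obtain ⟨i, hi, h⟩ := hr (m + Finsupp.single (f a) 1) (by
    rw [mem_support_iff] at hm ⊢
    rwa [coeff_mul_X])
  refine ⟨i, hi, ?_⟩
  obtain ⟨j, hj, rfl⟩ := hi
  have hne : f a ≠ f j := fun hh => ha (hf hh ▸ hj)
  simpa [Finsupp.single_apply, hne] using h

theorem strongReg_of_basis {A : Type*} [CommRing A] {ι : Type} {κ : Type*}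
    (b : Module.Basis (ι ⊕ κ) A (Fin N → A)) : StrongReg (fun i => linF (b (Sum.inl i))) := by
  let e1 := SymmetricAlgebra.equivMvPolynomial (Pi.basisFun A (Fin N))
  let e2 := SymmetricAlgebra.equivMvPolynomial b
  have h : ∀ c, linF c = e1 (SymmetricAlgebra.ι A _ c) := by
    intro c
    conv_rhs => rw [← (Pi.basisFun A (Fin N)).sum_repr c]
    simp only [map_sum, map_smul]
    unfold linF
    refine Finset.sum_congr rfl fun i _ => ?_
    rw [show e1 (SymmetricAlgebra.ι A _ (Pi.basisFun A (Fin N) i)) = X i from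
      SymmetricAlgebra.equivMvPolynomial_ι_apply _ i, MvPolynomial.smul_eq_C_mul]
    simp
  refine StrongReg.of_equiv _ (e1.symm.trans e2).toRingEquiv ?_
  convert strongReg_X (A := A) (Sum.inl : ι → ι ⊕ κ) Sum.inl_injective using 2 with i
  rw [h]
  simp [e2]

theorem strongReg_of_free {A : Type*} [CommRing A] {ι : Type} (c : ι → Fin N → A)
    (hc : LinearIndependent A c)
    (hf : Module.Free A ((Fin N → A) ⧸ Submodule.span A (Set.range c))) :
    StrongReg (fun i => linF (c i)) := by
  have h := strongReg_of_basis (Module.Basis.sumQuot (Module.Basis.span hc)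
    (Module.Free.chooseBasis A ((Fin N → A) ⧸ Submodule.span A (Set.range c))))
  simpa [Module.Basis.sumQuot_inl, Module.Basis.span_apply] using h

theorem eq_linF {A : Type*} [CommRing A] {p : MvPolynomial (Fin N) A} (hp : p.IsHomogeneous 1) :
    p = linF (fun i => coeff (Finsupp.single i 1) p) := by
  ext m
  unfold linF
  rw [coeff_sum]
  simp only [coeff_C_mul, coeff_X]
  by_cases hm : m.degree = 1
  · obtain ⟨i, rfl⟩ := (Finsupp.sum_eq_one_iff m).1
      (by rw [← hm, Finsupp.degree_apply]; rfl)
    rw [Finset.sum_eq_single i]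
    · simp
    · intro j _ hj
      rw [if_neg, mul_zero]
      intro h; exact hj (Finsupp.single_left_injective one_ne_zero h)
    · simp
  · rw [hp.coeff_eq_zero (by simpa using hm), Finset.sum_eq_zero]
    intro j _
    rw [if_neg, mul_zero]
    rintro rfl; exact hm (by simp)

variable {K : Type*} [Field K]

theorem strongReg_field {ι : Type} (p : ι → MvPolynomial (Fin N) K)
    (hp : ∀ i, (p i).IsHomogeneous 1) (h : LinearIndependent K p) : StrongReg p := by
  have e : p = fun i => linF (fun k => coeff (Finsupp.single k 1) (p i)) :=
    funext fun i => eq_linF (hp i)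
  rw [e]
  refine strongReg_of_free _ ?_ inferInstance
  let L : (Fin N → K) →ₗ[K] MvPolynomial (Fin N) K :=
    { toFun := linF
      map_add' := fun a b => by simp [linF, add_mul, Finset.sum_add_distrib]
      map_smul' := fun a b => by
        simp [linF, Finset.smul_sum, MvPolynomial.smul_eq_C_mul, mul_assoc] }
  refine LinearIndependent.of_comp L ?_
  have h' := h
  rw [e] at h'
  exact h'

open scoped Polynomial in
/-- families over `K[τ]` independent at every point -/
theorem pencil_free [IsAlgClosed K] {ι : Type} [Fintype ι] (c : ι → Fin N → K[X])
    (h : ∀ l : K, LinearIndependent K (fun i k => (c i k).eval l)) :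
    LinearIndependent K[X] c ∧
      Module.Free K[X] ((Fin N → K[X]) ⧸ Submodule.span K[X] (Set.range c)) := by
  -- key: coefficients of a combination divisible by `τ - l` are divisible
  have key : ∀ (l : K) (z : ι → K[X]) (m : Fin N → K[X]),
      ∑ i, z i • c i = (Polynomial.X - Polynomial.C l) • m →
      ∃ w : ι → K[X], z = (Polynomial.X - Polynomial.C l) • w := by
    intro l z m hz
    have h1 : ∀ i, (z i).eval l = 0 := by
      refine Fintype.linearIndependent_iff.1 (h l) (fun i => (z i).eval l) ?_
      ext k
      have := congrArg (fun f => (f k).eval l) hz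
      simpa [Polynomial.eval_finsetSum] using this
    have h2 : ∀ i, ∃ w, z i = (Polynomial.X - Polynomial.C l) * w := fun i =>
      Polynomial.dvd_iff_isRoot.2 (h1 i)
    choose w hw using h2
    exact ⟨w, funext fun i => by simp [hw]⟩
  have hne : ∀ l : K, (Polynomial.X - Polynomial.C l) ≠ 0 := Polynomial.X_sub_C_ne_zero
  have key2 : ∀ (n : ℕ) (f : K[X]), f.natDegree = n → f ≠ 0 → ∀ m : Fin N → K[X],
      f • m ∈ Submodule.span K[X] (Set.range c) → m ∈ Submodule.span K[X] (Set.range c) := by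
    intro n
    induction n with
    | zero =>
      intro f hf hf0 m hm
      rw [Polynomial.eq_C_of_natDegree_eq_zero hf] at hm hf0
      have : f.coeff 0 ≠ 0 := by simpa using hf0
      have h3 := Submodule.smul_mem _ (Polynomial.C (f.coeff 0)⁻¹) hm
      rwa [smul_smul, ← Polynomial.C_mul, inv_mul_cancel₀ this, Polynomial.C_1, one_smul] at h3
    | succ n ih =>
      intro f hf hf0 m hm
      obtain ⟨l, hl⟩ := IsAlgClosed.exists_root f (by
        rw [Polynomial.degree_eq_natDegree hf0, hf]; exact_mod_cast Nat.succ_ne_zero n)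
      obtain ⟨g, rfl⟩ := Polynomial.dvd_iff_isRoot.2 hl
      have hg : g ≠ 0 := right_ne_zero_of_mul hf0
      rw [Polynomial.natDegree_mul (hne l) hg, Polynomial.natDegree_X_sub_C] at hf
      refine ih g (by omega) hg m ?_
      rw [mul_smul] at hm
      rw [Submodule.mem_span_range_iff_exists_fun] at hm ⊢
      obtain ⟨z, hz⟩ := hm
      obtain ⟨w, rfl⟩ := key l z _ hz
      refine ⟨w, smul_right_injective _ (hne l) ?_⟩
      simp only [← hz, Finset.smul_sum, Pi.smul_apply, smul_assoc]
  constructor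
  · rw [Fintype.linearIndependent_iff]
    -- infinite descent on degree
    have key3 : ∀ (n : ℕ) (z : ι → K[X]), (∀ i, (z i).natDegree < n) →
        ∑ i, z i • c i = 0 → ∀ i, z i = 0 := by
      intro n
      induction n with
      | zero => intro z hz _ i; exact absurd (hz i) (by omega)
      | succ n ih =>
        intro z hz h0
        obtain ⟨w, rfl⟩ := key 0 z 0 (by simpa using h0)
        have hw0 : ∑ i, w i • c i = 0 := by
          refine smul_right_injective _ (hne 0) ?_
          simpa only [smul_zero, Finset.smul_sum, Pi.smul_apply, smul_assoc] using h0
        by_cases hn : n = 0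
        · intro i
          by_contra hi
          have hwi : w i ≠ 0 := by rintro hh; simp [hh] at hi
          have := hz i
          simp only [Pi.smul_apply, smul_eq_mul] at this
          rw [Polynomial.natDegree_mul (hne 0) hwi, Polynomial.natDegree_X_sub_C] at this
          omega
        · have := ih w (fun i => by
            by_cases hwi : w i = 0
            · simp [hwi]; omega
            · have := hz i
              simp only [Pi.smul_apply, smul_eq_mul] at this
              rw [Polynomial.natDegree_mul (hne 0) hwi, Polynomial.natDegree_X_sub_C] at this
              omega) hw0
          intro i; simp [this i]
    intro z hz
    exact key3 (Finset.univ.sup (fun i => (z i).natDegree) + 1) z (fun i =>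
      Nat.lt_succ_of_le (Finset.le_sup (f := fun i => (z i).natDegree) (Finset.mem_univ i))) hz
  · have : Module.IsTorsionFree K[X] ((Fin N → K[X]) ⧸ Submodule.span K[X] (Set.range c)) := by
      refine Module.IsTorsionFree.of_smul_eq_zero ?_
      intro f m hfm
      by_contra! hh
      induction m using Submodule.Quotient.induction_on with | _ m
      rw [← Submodule.Quotient.mk_smul, Submodule.Quotient.mk_eq_zero] at hfm
      exact hh.2 ((Submodule.Quotient.mk_eq_zero _).2 (key2 _ f rfl hh.1 m hfm))
    infer_instance

open scoped Polynomial in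
theorem strongReg_pencil [IsAlgClosed K] {ι : Type} [Fintype ι]
    (u v : ι → MvPolynomial (Fin N) K)
    (hu : ∀ i, (u i).IsHomogeneous 1) (hv : ∀ i, (v i).IsHomogeneous 1)
    (h : ∀ l : K, LinearIndependent K (fun i => u i - l • v i)) :
    StrongReg (fun j => (Polynomial.C (u j) - Polynomial.X * Polynomial.C (v j) :
      (MvPolynomial (Fin N) K)[X])) := by
  let e : (MvPolynomial (Fin N) K)[X] ≃ₐ[K] MvPolynomial (Fin N) K[X] :=
    (optionEquivLeft K (Fin N)).symm.trans (optionEquivRight K (Fin N))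
  refine StrongReg.of_equiv _ e.toRingEquiv ?_
  let c : ι → Fin N → K[X] := fun i k =>
    Polynomial.C (coeff (Finsupp.single k 1) (u i)) -
      Polynomial.X * Polynomial.C (coeff (Finsupp.single k 1) (v i))
  have hc := pencil_free c (fun l => by
    have hl := h l
    rw [Fintype.linearIndependent_iff] at hl ⊢
    intro g hg
    refine hl g ?_
    have hom : (∑ i, g i • (u i - l • v i)).IsHomogeneous 1 := by
      refine IsHomogeneous.sum _ _ _ fun i _ => ?_
      simp only [MvPolynomial.smul_eq_C_mul]
      exact ((hu i).sub ((hv i).C_mul l)).C_mul _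
    rw [eq_linF hom]
    unfold linF
    refine Finset.sum_eq_zero fun k _ => ?_
    have := congrFun hg k
    simp only [Finset.sum_apply, Pi.smul_apply, smul_eq_mul, c, Polynomial.eval_sub,
      Polynomial.eval_C, Polynomial.eval_mul, Polynomial.eval_X, Pi.zero_apply] at this
    simp only [coeff_sum, coeff_smul, coeff_sub, smul_eq_mul, this, C_0, zero_mul])
  have hs := strongReg_of_free c hc.1 hc.2
  have heX : e Polynomial.X = C Polynomial.X := by simp [e]
  have heu : ∀ p : MvPolynomial (Fin N) K, p.IsHomogeneous 1 → e (Polynomial.C p) =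
      ∑ k, C (Polynomial.C (coeff (Finsupp.single k 1) p)) * X k := by
    intro p hp
    conv_lhs => rw [eq_linF hp]
    simp [linF, e]
  convert hs using 2 with j
  change e _ = _
  rw [map_sub, map_mul, heX, heu _ (hu j), heu _ (hv j)]
  unfold linF
  rw [Finset.mul_sum, ← Finset.sum_sub_distrib]
  refine Finset.sum_congr rfl fun k _ => ?_
  simp only [c, C_sub, C_mul]
  ring

end lin

theorem pd_principal {R : Type u} [CommRing R] [IsDomain R] (f : R) :
    PdLT R 2 (R ⧸ (Ideal.span {f} : Ideal R)) := by
  by_cases hf : f = 0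
  · exact (PdLT.quot_bot (by simp [hf])).mono (by omega)
  · have h0 : PdLT R 1 (R ⧸ (⊥ : Ideal R)) := PdLT.quot_bot rfl
    refine (PdLT.quot (p := (⊥ : Ideal R)) (q := (⊥ : Ideal R))
      (LinearMap.mulRight R f) LinearMap.id ?_ ?_ ?_ 1).2.1 h0 (h0.mono (by omega))
    · intro a; simp [hf]
    · intro b
      simp [Ideal.mem_span_singleton', sub_eq_zero, eq_comm]
    · intro c; exact ⟨c, by simp⟩

/-- if `I` is minimally generated by `n` quadrics, contained in the prime
`(x, y)`, and represented by minors by a 1-generic `2 × (n+1)` matrix `M` with first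
column `(x, y)ᵀ`, then `pd(R/I) ≤ n`. -/
theorem stmt7 (K : Type u) [Field K] [IsAlgClosed K] (N n : ℕ)
    (x y : MvPolynomial (Fin N) K) (hx : x.IsHomogeneous 1) (hy : y.IsHomogeneous 1)
    (hxy : LinearIndependent K ![x, y])
    (hprime : (Ideal.span {x, y}).IsPrime)
    (u v : Fin n → MvPolynomial (Fin N) K)
    (hu : ∀ j, (u j).IsHomogeneous 1) (hv : ∀ j, (v j).IsHomogeneous 1)
    (I : Ideal (MvPolynomial (Fin N) K))
    (hI : I = repByMinors x y u v)
    (hle : I ≤ Ideal.span {x, y})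
    (hmin : ∀ (k : ℕ) (h : Fin k → MvPolynomial (Fin N) K),
      I = Ideal.span (Set.range h) → n ≤ k)
    (h1g : OneGeneric K (Matrix.of ![Fin.cons x u, Fin.cons y v] : Matrix (Fin 2) (Fin (n + 1)) (MvPolynomial (Fin N) K))) :
    projDim (MvPolynomial (Fin N) K) (MvPolynomial (Fin N) K ⧸ I) ≤ (n : ℕ∞) := by
  classical
  have hle' := hle
  subst hI
  apply sInf_le
  refine ⟨n, PdLT.pdLE n _ ?_, rfl⟩
  obtain hn | hn | hn : n = 0 ∨ n = 1 ∨ 2 ≤ n := by omega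
  · subst hn
    exact PdLT.quot_bot (by simp [repByMinors])
  · subst hn
    have hs : repByMinors x y u v = Ideal.span {x * v 0 - y * u 0} := by
      unfold repByMinors
      congr 1
      ext z
      simp [Set.mem_range, eq_comm]
    rw [hs]
    exact pd_principal _
  let uu : Fin (n+1) → (MvPolynomial (Fin N) K) := Fin.cons x u
  let vv : Fin (n+1) → (MvPolynomial (Fin N) K) := Fin.cons y v
  have huu : ∀ j, (uu j).IsHomogeneous 1 := fun j => by
    refine Fin.cases ?_ (fun j => ?_) j
    · exact hx
    · exact hu j
  have hvv : ∀ j, (vv j).IsHomogeneous 1 := fun j => by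
    refine Fin.cases ?_ (fun j => ?_) j
    · exact hy
    · exact hv j
  have hind : ∀ a b : K, (a ≠ 0 ∨ b ≠ 0) →
      LinearIndependent K (fun j => a • uu j + b • vv j) := by
    intro a b hab
    rw [Fintype.linearIndependent_iff]
    intro g hg
    by_contra! hne
    refine h1g ![a, b] g ?_ ?_ ?_
    · intro h0
      have h0a := congrFun h0 0
      have h0b := congrFun h0 1
      simp at h0a h0b
      tauto
    · rintro rfl; simp at hne
    · rw [← hg, Fin.sum_univ_two, ← Finset.sum_add_distrib]
      refine Finset.sum_congr rfl fun j _ => ?_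
      simp only [Algebra.smul_def, Matrix.of_apply, Matrix.cons_val_zero, Matrix.cons_val_one,
        map_mul, uu, vv]
      ring
  have hregv : StrongReg vv := strongReg_field vv hvv (by
    simpa using hind 0 1 (Or.inr one_ne_zero))
  have hregl := strongReg_pencil uu vv huu hvv (fun l => by
    simpa [sub_eq_add_neg] using hind 1 (-l) (Or.inl one_ne_zero))
  have hC := pd_coker hregv hregl Finset.univ
  have hxyr : StrongReg ![x, y] := strongReg_field _ (fun i => by
    fin_cases i
    · exact hx
    · exact hy) hxy
  have hxypd := hxyr.pd Finset.univ
  have him : (![x, y] '' (Finset.univ : Finset (Fin 2)) : Set (MvPolynomial (Fin N) K)) = {x, y} := by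
    simp [Matrix.range_cons, Set.pair_comm]
  rw [him] at hxypd
  have hx0 : x ≠ 0 := by simpa using hxy.ne_zero 0
  refine (PdLT.quot (p := colSpan uu vv Finset.univ) (q := repByMinors x y u v)
    (r := Ideal.span {x, y}) (x • LinearMap.snd (MvPolynomial (Fin N) K) (MvPolynomial (Fin N) K) (MvPolynomial (Fin N) K) - y • LinearMap.fst (MvPolynomial (Fin N) K) (MvPolynomial (Fin N) K) (MvPolynomial (Fin N) K))
    LinearMap.id ?_ ?_ ?_ (n+1)).1 (hC.mono (by simp; omega)) (hxypd.mono (by simp; omega))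
  · have hsub : colSpan uu vv Finset.univ ≤ Submodule.comap
        (x • LinearMap.snd (MvPolynomial (Fin N) K) (MvPolynomial (Fin N) K) (MvPolynomial (Fin N) K) - y • LinearMap.fst (MvPolynomial (Fin N) K) (MvPolynomial (Fin N) K) (MvPolynomial (Fin N) K)) (repByMinors x y u v) := by
      unfold colSpan
      rw [Submodule.span_le]
      rintro _ ⟨j, -, rfl⟩
      refine Fin.cases ?_ (fun j => ?_) j
      · simp [uu, vv, mul_comm]
      · simp only [uu, vv, SetLike.mem_coe, Submodule.mem_comap]
        exact Ideal.subset_span ⟨j, rfl⟩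
    rintro ⟨p, q⟩
    refine ⟨fun h => ?_, fun h => hsub h⟩
    change x * q - y * p ∈ Ideal.span (Set.range fun j : Fin n => x * v j - y * u j) at h
    rw [Ideal.mem_span_range_iff_exists_fun] at h
    obtain ⟨z, hz⟩ := h
    have h1 : (∑ j, z j * u j, ∑ j, z j * v j) ∈ colSpan uu vv Finset.univ := by
      refine mem_colSpan.2 ⟨Fin.cons 0 z, ?_, ?_⟩ <;> simp [Fin.sum_univ_succ, uu, vv]
    have h2 : x * (q - ∑ j, z j * v j) = y * (p - ∑ j, z j * u j) := by
      have : ∑ j, z j * (x * v j - y * u j) = x * ∑ j, z j * v j - y * ∑ j, z j * u j := by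
        rw [Finset.mul_sum, Finset.mul_sum, ← Finset.sum_sub_distrib]
        exact Finset.sum_congr rfl fun _ _ => by ring
      linear_combination this - hz
    have h3 := hxyr {0} 1 (by simp) (p - ∑ j, z j * u j) (by
      simp only [Finset.coe_singleton, Set.image_singleton, Matrix.cons_val_zero,
        Matrix.cons_val_one, Ideal.mem_span_singleton]
      exact ⟨_, by rw [mul_comm, ← h2]⟩)
    simp only [Finset.coe_singleton, Set.image_singleton, Matrix.cons_val_zero,
      Ideal.mem_span_singleton] at h3
    obtain ⟨d, hd⟩ := h3
    have h4 : q - ∑ j, z j * v j = y * d := by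
      apply mul_left_cancel₀ hx0
      rw [h2, hd]; ring
    have h5 : (x, y) ∈ colSpan uu vv Finset.univ :=
      Submodule.subset_span ⟨0, by simp, rfl⟩
    have h6 := add_mem h1 (Submodule.smul_mem _ d h5)
    convert h6 using 1
    ext1
    · simp only [Prod.fst_add, Prod.smul_fst, smul_eq_mul]
      linear_combination hd
    · simp only [Prod.snd_add, Prod.smul_snd, smul_eq_mul]
      linear_combination h4
  · intro b
    have hf : ∀ a : (MvPolynomial (Fin N) K) × (MvPolynomial (Fin N) K), (x • LinearMap.snd (MvPolynomial (Fin N) K) (MvPolynomial (Fin N) K) (MvPolynomial (Fin N) K) - y • LinearMap.fst (MvPolynomial (Fin N) K) (MvPolynomial (Fin N) K) (MvPolynomial (Fin N) K)) a =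
      x * a.2 - y * a.1 := fun a => rfl
    simp only [hf, LinearMap.id_apply]
    constructor
    · intro hb
      obtain ⟨s, t, rfl⟩ := Ideal.mem_span_pair.1 hb
      refine ⟨(-t, s), ?_⟩
      rw [show s * x + t * y - (x * s - y * -t) = 0 by ring]
      exact zero_mem _
    · rintro ⟨a, ha⟩
      have := hle' ha
      rw [Ideal.mem_span_pair] at this ⊢
      obtain ⟨s, t, hst⟩ := this
      exact ⟨s + a.2, t - a.1, by linear_combination hst⟩
  · intro c; exact ⟨c, by simp⟩
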